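/- Let n ≥ 1, let K ⊆ ℝⁿ be a proper cone, let M ∈ ℝ^{n×n} leave K invariant, and let ε > 0. Then there exists f in the interior of the dual cone K* such that the cone linear absolute norm ‖·‖_f determined by f satisfies ‖M‖_f < ρ(M) + ε, where ‖M‖_f := sup_{x ≠ 0} ‖Mx‖_f / ‖x‖_f is the induced matrix norm and ρ(M) is the spectral radius of M. -/

import Mathlib

open MeasureTheory Filter Topology
open scoped ENNReal RealInnerProductSpace

noncomputable section

/-- The space of real `n × n` matrices. -/
abbrev Mat (n : ℕ) := Matrix (Fin n) (Fin n) ℝ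

/-- Euclidean space `ℝⁿ`. -/
abbrev EucSp (n : ℕ) := EuclideanSpace ℝ (Fin n)

/-- The (Borel = product) measurable structure on `n × n` real matrices. -/
instance matMeasurableSpace (n : ℕ) : MeasurableSpace (Mat n) :=
  inferInstanceAs (MeasurableSpace (Fin n → Fin n → ℝ))

/-- Lebesgue measure on the space of `n × n` real matrices `≅ ℝ^{n²}`. -/
def matLebesgue (n : ℕ) : Measure (Mat n) :=
  (inferInstance : MeasureSpace (Fin n → Fin n → ℝ)).volume

/-- The operator norm (maximal singular value) of a real square matrix, induced by the
Euclidean norm. -/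
def opNorm {m : ℕ} (A : Matrix (Fin m) (Fin m) ℝ) : ℝ :=
  ‖LinearMap.toContinuousLinearMap (Matrix.toEuclideanLin A)‖

/-- The product `A_k ⋯ A_1` of the matrices `f 0 = A_1, …, f (k-1) = A_k` (decreasing order of
indices). -/
def prodRev {m k : ℕ} (f : Fin k → Matrix (Fin m) (Fin m) ℝ) : Matrix (Fin m) (Fin m) ℝ :=
  ((List.ofFn f).reverse).prod

/-- The joint spectral radius of a set of matrices:
`ρ̂(M) = limsup_{k→∞} sup_{A₁,…,A_k ∈ M} ‖A_k ⋯ A₁‖^(1/k)`. -/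
def jsr {m : ℕ} (M : Set (Matrix (Fin m) (Fin m) ℝ)) : ℝ :=
  limsup (fun k : ℕ =>
    sSup {x : ℝ | ∃ f : Fin k → Matrix (Fin m) (Fin m) ℝ,
      (∀ i, f i ∈ M) ∧ x = opNorm (prodRev f)} ^ ((1 : ℝ) / k)) atTop

/-- `E[‖A_k ⋯ A₁‖^p]` where `A₁, …, A_k` are i.i.d. with law `μ`. -/
def kExpNorm {m : ℕ} (μ : Measure (Mat m)) (p k : ℕ) : ℝ :=
  ∫ f : Fin k → Mat m, opNorm (prodRev f) ^ p ∂(Measure.pi fun _ => μ)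

/-- The `L^p`-norm joint spectral radius (`p`-radius) of a probability distribution `μ`:
`ρ_{p,μ} = lim_{k→∞} (E[‖A_k ⋯ A₁‖^p])^{1/(pk)}`; since this limit exists for distributions
with bounded support, it coincides with the `limsup` used here. -/
def pRadius {m : ℕ} (μ : Measure (Mat m)) (p : ℕ) : ℝ :=
  limsup (fun k : ℕ => kExpNorm μ p k ^ (1 / (p * k : ℝ))) atTop

/-- The (topological) support of a measure on matrices. -/
def msupport {m : ℕ} (μ : Measure (Mat m)) : Set (Mat m) :=
  {A | ∀ ε : ℝ, 0 < ε → μ {B | opNorm (B - A) < ε} ≠ 0}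

/-- `μ` has bounded support. -/
def HasBoundedSupport {m : ℕ} (μ : Measure (Mat m)) : Prop :=
  ∃ C : ℝ, ∀ A ∈ msupport μ, opNorm A ≤ C

/-- A proper cone of `ℝⁿ`: a closed convex pointed cone with nonempty interior. -/
structure IsProperCone {m : ℕ} (K : Set (EucSp m)) : Prop where
  isClosed : IsClosed K
  convex : Convex ℝ K
  smul_mem : ∀ c : ℝ, 0 ≤ c → ∀ x ∈ K, c • x ∈ K
  pointed : ∀ x ∈ K, -x ∈ K → x = 0
  solid : (interior K).Nonempty

/-- A matrix `A` leaves a cone `K` invariant: `A K ⊆ K`. -/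
def LeavesInv {m : ℕ} (A : Matrix (Fin m) (Fin m) ℝ) (K : Set (EucSp m)) : Prop :=
  ∀ x ∈ K, Matrix.toEuclideanLin A x ∈ K

/-- A set of matrices leaves a cone invariant if each of its members does. -/
def SetLeavesInv {m : ℕ} (S : Set (Matrix (Fin m) (Fin m) ℝ)) (K : Set (EucSp m)) : Prop :=
  ∀ A ∈ S, LeavesInv A K

/-- `π(K)`: the set of matrices leaving the cone `K` invariant. -/
def piCone {m : ℕ} (K : Set (EucSp m)) : Set (Mat m) := {A | LeavesInv A K}

/-- Distance (valued in `ℝ≥0∞`, with `d(A, ∅) = ∞`) from a matrix to a set of matrices, in the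
operator norm. -/
def edistSet {m : ℕ} (A : Mat m) (S : Set (Mat m)) : ℝ≥0∞ :=
  ⨅ B ∈ S, ENNReal.ofReal (opNorm (A - B))

/-- Hausdorff distance between two sets of matrices (operator norm, valued in `ℝ≥0∞`). -/
def hausdorffDistE {m : ℕ} (S T : Set (Mat m)) : ℝ≥0∞ :=
  max (⨆ A ∈ S, edistSet A T) (⨆ B ∈ T, edistSet B S)

/-- `S_M = {A : A − M leaves K invariant}`, i.e. `{A : A ≥^K M}`. -/
def matSSet {m : ℕ} (K : Set (EucSp m)) (M : Mat m) : Set (Mat m) :=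
  {A | LeavesInv (A - M) K}

/-- `π_r = {M ∈ π(K) : d(M, ∂π(K)) ≥ r}`. -/
def piConeR {m : ℕ} (K : Set (EucSp m)) (r : ℝ) : Set (Mat m) :=
  {M | M ∈ piCone K ∧ ENNReal.ofReal r ≤ edistSet M (frontier (piCone K))}

/-- `M_r = (π_r ∩ supp μ_c) ∪ supp μ_s`. -/
def MrSet {m : ℕ} (K : Set (EucSp m)) (μc μs : Measure (Mat m)) (r : ℝ) : Set (Mat m) :=
  (piConeR K r ∩ msupport μc) ∪ msupport μs

/-- The measure `ν` is zero or a finite linear combination (with positive coefficients) of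
Dirac measures. -/
def IsFiniteDiracComb {m : ℕ} (ν : Measure (Mat m)) : Prop :=
  ν = 0 ∨ ∃ (N : ℕ) (w : Fin N → ℝ) (Ms : Fin N → Mat m),
    (∀ i, 0 < w i) ∧ ν = ∑ i, ENNReal.ofReal (w i) • Measure.dirac (Ms i)

/-- The `p`-th Kronecker power of a square matrix (with `A^{⊗0} = 1`, `A^{⊗(p+1)} = A^{⊗p} ⊗ A`). -/
def kronPow {m : ℕ} (A : Matrix (Fin m) (Fin m) ℝ) :
    (p : ℕ) → Matrix (Fin (m ^ p)) (Fin (m ^ p)) ℝ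
  | 0 => 1
  | p + 1 =>
    Matrix.reindex (finProdFinEquiv.trans (finCongr (pow_succ m p).symm))
      (finProdFinEquiv.trans (finCongr (pow_succ m p).symm))
      (Matrix.kroneckerMap (· * ·) (kronPow A p) A)

/-- The `q`-th Kronecker power of a vector. -/
def vecKronPow {m : ℕ} (x : EucSp m) : (q : ℕ) → EucSp (m ^ q)
  | 0 => WithLp.toLp 2 fun _ => 1
  | q + 1 => WithLp.toLp 2 fun i =>
      vecKronPow x q (finProdFinEquiv.symm (finCongr (pow_succ m q) i)).1 *
        x (finProdFinEquiv.symm (finCongr (pow_succ m q) i)).2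

/-- The spectral radius of a real square matrix: the largest modulus of a complex eigenvalue. -/
def specRad {m : ℕ} (A : Matrix (Fin m) (Fin m) ℝ) : ℝ :=
  sSup ((norm : ℂ → ℝ) '' spectrum ℂ (A.map Complex.ofReal))

/-- The entrywise expectation `E[A^{⊗p}]` of the `p`-th Kronecker power under `μ`. -/
def kronExp {m : ℕ} (μ : Measure (Mat m)) (p : ℕ) :
    Matrix (Fin (m ^ p)) (Fin (m ^ p)) ℝ :=
  Matrix.of fun i j => ∫ A, kronPow A p i j ∂μ

/-- `V` is a stochastic Lyapunov function for `μ` of degree `p` with growth rate `γ`. -/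
def IsStochLyap {m : ℕ} (μ : Measure (Mat m)) (p : ℕ) (γ : ℝ) (V : EucSp m → ℝ) : Prop :=
  (∃ C₁ : ℝ, 0 < C₁ ∧ ∃ C₂ : ℝ, 0 < C₂ ∧
    ∀ x : EucSp m, C₁ * ‖x‖ ^ p ≤ V x ∧ V x ≤ C₂ * ‖x‖ ^ p) ∧
  ∀ x : EucSp m, (∫ A, V (Matrix.toEuclideanLin A x) ∂μ) ≤ γ ^ p * V x

/-- `ν` is a norm on `ℝ^m`. -/
def IsNormFn {m : ℕ} (ν : EucSp m → ℝ) : Prop :=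
  (∀ x, 0 ≤ ν x) ∧ (∀ x, ν x = 0 ↔ x = 0) ∧
  (∀ (a : ℝ) (x : EucSp m), ν (a • x) = |a| * ν x) ∧
  (∀ x y : EucSp m, ν (x + y) ≤ ν x + ν y)

/-- `ν` is cone absolute with respect to `K`:
`ν x = inf {ν (v + w) : v, w ∈ K, x = v − w}`. -/
def IsConeAbsolute {m : ℕ} (K : Set (EucSp m)) (ν : EucSp m → ℝ) : Prop :=
  ∀ x : EucSp m, ν x = sInf {r : ℝ | ∃ v ∈ K, ∃ w ∈ K, x = v - w ∧ r = ν (v + w)}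

/-- The dual cone `K* = {f : fᵀx ≥ 0 for all x ∈ K}`. -/
def dualConeSet {m : ℕ} (K : Set (EucSp m)) : Set (EucSp m) :=
  {f | ∀ x ∈ K, 0 ≤ ⟪f, x⟫}

/-- `ν` is cone linear with respect to `K`: `ν = ⟪f, ·⟫` on `K` for some `f ∈ K*`. -/
def IsConeLinear {m : ℕ} (K : Set (EucSp m)) (ν : EucSp m → ℝ) : Prop :=
  ∃ f ∈ dualConeSet K, ∀ x ∈ K, ν x = ⟪f, x⟫

/-- The matrix norm induced by a norm `ν` on `ℝ^m`. -/
def inducedNormFn {m : ℕ} (ν : EucSp m → ℝ) (A : Matrix (Fin m) (Fin m) ℝ) : ℝ :=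
  sSup {c : ℝ | ∃ x : EucSp m, x ≠ 0 ∧ c = ν (Matrix.toEuclideanLin A x) / ν x}

/-!
Choose `g` in the interior of `K*`, which is nonempty because `K` is pointed. For `r > ρ(M)` the
Neumann series `R = ∑ₖ (r⁻¹ M)ᵏ` converges and maps `K` into itself, and `f = Rᵀ g` satisfies
`f = g + r⁻¹ Mᵀ f`. Hence `f ≥ g` on `K`, so that `f` is again interior to `K*`, and `Mᵀ f ≤ r f`
on `K`. The cone norm of `f` is the largest seminorm dominated by `f` on `K`, and comparing it with
`x ↦ r⁻¹ ‖M x‖_f` gives `‖M‖_f ≤ r`.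
-/

section ConeNorm

variable {E : Type*} [AddCommGroup E] [Module ℝ E] {C : PointedCone ℝ E} {f : E →ₗ[ℝ] ℝ}
  {x v w : E} {b r : ℝ}

/-- The cone linear absolute norm determined by a linear functional `f` that is nonnegative on the
cone `C`, see `coneSeminorm`. It takes the junk value `0` outside `C - C`. -/
def coneNorm (C : PointedCone ℝ E) (f : E →ₗ[ℝ] ℝ) (x : E) : ℝ :=
  sInf {r : ℝ | ∃ v ∈ C, ∃ w ∈ C, x = v - w ∧ r = f (v + w)}

theorem coneNorm_sub_le (hf : ∀ x ∈ C, 0 ≤ f x) (hv : v ∈ C) (hw : w ∈ C) :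
    coneNorm C f (v - w) ≤ f (v + w) := by
  refine csInf_le ⟨0, ?_⟩ ⟨v, hv, w, hw, rfl, rfl⟩
  rintro _ ⟨v, hv, w, hw, -, rfl⟩
  exact hf _ (add_mem hv hw)

theorem le_coneNorm (hC : C.toConvexCone.IsReproducing)
    (h : ∀ v ∈ C, ∀ w ∈ C, x = v - w → b ≤ f (v + w)) : b ≤ coneNorm C f x := by
  obtain ⟨v, hv, w, hw, hx⟩ := hC.sub_eq_univ.ge (Set.mem_univ x)
  refine le_csInf ⟨_, v, hv, w, hw, hx.symm, rfl⟩ ?_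
  rintro _ ⟨v, hv, w, hw, hx, rfl⟩
  exact h v hv w hw hx

theorem coneNorm_of_mem (hC : C.toConvexCone.IsReproducing) (hf : ∀ x ∈ C, 0 ≤ f x) (hx : x ∈ C) :
    coneNorm C f x = f x := by
  refine le_antisymm (by simpa using coneNorm_sub_le hf hx C.zero_mem) (le_coneNorm hC ?_)
  rintro v - w hw rfl
  rw [map_sub, map_add]
  linarith [hf w hw]

theorem coneNorm_eq_sInf_coneNorm (hC : C.toConvexCone.IsReproducing) (hf : ∀ x ∈ C, 0 ≤ f x)
    (x : E) :
    coneNorm C f x = sInf {r : ℝ | ∃ v ∈ C, ∃ w ∈ C, x = v - w ∧ r = coneNorm C f (v + w)} := by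
  refine congrArg sInf (Set.ext fun r => exists_congr fun v => and_congr_right fun hv =>
    exists_congr fun w => and_congr_right fun hw => ?_)
  rw [coneNorm_of_mem hC hf (add_mem hv hw)]

theorem le_mul_coneNorm (hC : C.toConvexCone.IsReproducing) (hr : 0 ≤ r)
    (h : ∀ v ∈ C, ∀ w ∈ C, x = v - w → b ≤ r * f (v + w)) : b ≤ r * coneNorm C f x := by
  rcases hr.eq_or_lt with rfl | hr
  · obtain ⟨v, hv, w, hw, hx⟩ := hC.sub_eq_univ.ge (Set.mem_univ x)
    simpa using h v hv w hw hx.symm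
  · rw [← div_le_iff₀' hr]
    exact le_coneNorm hC fun v hv w hw hx => (div_le_iff₀' hr).2 (h v hv w hw hx)

theorem coneNorm_add_le (hC : C.toConvexCone.IsReproducing) (hf : ∀ x ∈ C, 0 ≤ f x) (x y : E) :
    coneNorm C f (x + y) ≤ coneNorm C f x + coneNorm C f y := by
  rw [← sub_le_iff_le_add]
  refine le_coneNorm hC fun v hv w hw hx => ?_
  rw [sub_le_comm]
  refine le_coneNorm hC fun v' hv' w' hw' hy => ?_
  rw [sub_le_iff_le_add']
  calc coneNorm C f (x + y) = coneNorm C f ((v + v') - (w + w')) := by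
        rw [hx, hy, add_sub_add_comm]
    _ ≤ f ((v + v') + (w + w')) := coneNorm_sub_le hf (add_mem hv hv') (add_mem hw hw')
    _ = f (v + w) + f (v' + w') := by rw [add_add_add_comm, map_add]

theorem coneNorm_smul_le (hC : C.toConvexCone.IsReproducing) (hf : ∀ x ∈ C, 0 ≤ f x) (a : ℝ)
    (x : E) : coneNorm C f (a • x) ≤ ‖a‖ * coneNorm C f x := by
  refine le_mul_coneNorm hC (norm_nonneg a) fun v hv w hw hx => ?_
  have hv' : ‖a‖ • v ∈ C := PointedCone.smul_mem C (norm_nonneg a) hv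
  have hw' : ‖a‖ • w ∈ C := PointedCone.smul_mem C (norm_nonneg a) hw
  rw [← smul_eq_mul, ← map_smul, smul_add, hx, smul_sub]
  rcases le_total 0 a with ha | ha
  · rw [Real.norm_of_nonneg ha] at hv' hw' ⊢
    exact coneNorm_sub_le hf hv' hw'
  · rw [Real.norm_of_nonpos ha] at hv' hw' ⊢
    have hflip : a • v - a • w = -a • w - -a • v := by module
    rw [hflip, add_comm]
    exact coneNorm_sub_le hf hw' hv'

/-- The cone linear absolute norm as a seminorm, for a reproducing cone. -/
def coneSeminorm (C : PointedCone ℝ E) (hC : C.toConvexCone.IsReproducing) (f : E →ₗ[ℝ] ℝ)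
    (hf : ∀ x ∈ C, 0 ≤ f x) : Seminorm ℝ E :=
  Seminorm.ofSMulLE (coneNorm C f) (by simpa using coneNorm_of_mem hC hf C.zero_mem)
    (coneNorm_add_le hC hf) (coneNorm_smul_le hC hf)

theorem seminorm_le_mul_coneSeminorm (hC : C.toConvexCone.IsReproducing) (hf : ∀ x ∈ C, 0 ≤ f x)
    (hr : 0 ≤ r) (p : Seminorm ℝ E) (hp : ∀ x ∈ C, p x ≤ r * f x) (x : E) :
    p x ≤ r * coneSeminorm C hC f hf x := by
  refine le_mul_coneNorm hC hr fun v hv w hw hx => ?_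
  calc p x ≤ p v + p w := hx ▸ map_sub_le_add p v w
    _ ≤ r * f v + r * f w := add_le_add (hp v hv) (hp w hw)
    _ = r * f (v + w) := by rw [map_add, mul_add]

theorem coneSeminorm_map_le_mul (hC : C.toConvexCone.IsReproducing) (hf : ∀ x ∈ C, 0 ≤ f x)
    (hr : 0 ≤ r) {T : E →ₗ[ℝ] E} (hT : ∀ x ∈ C, T x ∈ C) (hfT : ∀ x ∈ C, f (T x) ≤ r * f x)
    (x : E) : coneSeminorm C hC f hf (T x) ≤ r * coneSeminorm C hC f hf x := by
  refine seminorm_le_mul_coneSeminorm hC hf hr ((coneSeminorm C hC f hf).comp T) (fun x hx => ?_) x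
  exact (coneNorm_of_mem hC hf (hT x hx)).trans_le (hfT x hx)

theorem coneSeminorm_eq_zero_iff {E : Type*} [NormedAddCommGroup E] [NormedSpace ℝ E]
    {C : PointedCone ℝ E} {f : E →ₗ[ℝ] ℝ} (hC : C.toConvexCone.IsReproducing)
    (hf : ∀ x ∈ C, 0 ≤ f x) {δ : ℝ} (hδ : 0 < δ) (hfδ : ∀ x ∈ C, δ * ‖x‖ ≤ f x) {x : E} :
    coneSeminorm C hC f hf x = 0 ↔ x = 0 := by
  refine ⟨fun hx => ?_, fun hx => hx ▸ map_zero _⟩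
  have hle : ‖x‖ ≤ δ⁻¹ * coneSeminorm C hC f hf x :=
    seminorm_le_mul_coneSeminorm hC hf (inv_nonneg.2 hδ.le) (normSeminorm ℝ E)
      (fun y hy => (le_inv_mul_iff₀ hδ).2 (hfδ y hy)) x
  simpa [hx] using hle

end ConeNorm

theorem isReproducing_of_nonempty_interior {E : Type*} [NormedAddCommGroup E] [NormedSpace ℝ E]
    {C : PointedCone ℝ E} (hC : (interior (C : Set E)).Nonempty) :
    C.toConvexCone.IsReproducing := by
  rcases subsingleton_or_nontrivial E with hE | hE
  · exact .of_univ_subset fun x _ =>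
      ⟨0, C.zero_mem, 0, C.zero_mem, Subsingleton.elim _ _⟩
  · exact .of_span_eq_top (Submodule.eq_top_of_nonempty_interior' _
      (hC.mono (interior_mono Submodule.subset_span)))

section InnerDual

variable {E : Type*} [NormedAddCommGroup E] [InnerProductSpace ℝ E] [CompleteSpace E]

open ProperCone

theorem mem_interior_innerDual_iff {s : Set E} {f : E} :
    f ∈ interior (innerDual s : Set E) ↔ ∃ δ > 0, ∀ x ∈ s, δ * ‖x‖ ≤ ⟪f, x⟫ := by
  rw [mem_interior_iff_mem_nhds, Metric.nhds_basis_closedBall.mem_iff]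
  refine exists_congr fun δ => and_congr_right fun hδ => ⟨fun h x hx => ?_, fun h g hg x hx => ?_⟩
  · rcases eq_or_ne x 0 with rfl | hx0
    · simp
    have hmem : f - (δ / ‖x‖) • x ∈ innerDual s := by
      apply h
      rw [mem_closedBall_iff_norm, sub_sub_cancel_left, norm_neg, norm_smul,
        Real.norm_of_nonneg (by positivity), div_mul_cancel₀ _ (norm_ne_zero_iff.2 hx0)]
    calc δ * ‖x‖ = ⟪x, (δ / ‖x‖) • x⟫ := by
          rw [real_inner_smul_right, real_inner_self_eq_norm_mul_norm, ← mul_assoc,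
            div_mul_cancel₀ _ (norm_ne_zero_iff.2 hx0)]
      _ ≤ ⟪x, f⟫ := by
          simpa only [inner_sub_right, sub_nonneg] using mem_innerDual.1 hmem hx
      _ = ⟪f, x⟫ := real_inner_comm _ _
  · have hsub : ⟪f - g, x⟫ ≤ ⟪f, x⟫ :=
      calc ⟪f - g, x⟫ ≤ ‖f - g‖ * ‖x‖ := real_inner_le_norm _ _
        _ ≤ δ * ‖x‖ := by
          gcongr
          exact mem_closedBall_iff_norm'.1 hg
        _ ≤ ⟪f, x⟫ := h x hx
    rw [inner_sub_left, sub_le_self_iff] at hsub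
    exact hsub.trans_eq (real_inner_comm _ _)

theorem interior_innerDual_nonempty [FiniteDimensional ℝ E] {C : ProperCone ℝ E}
    (hC : C.toPointedCone.toConvexCone.Salient) :
    (interior (innerDual (C : Set E) : Set E)).Nonempty := by
  set D : ProperCone ℝ E := innerDual (C : Set E)
  rw [D.convex.interior_nonempty_iff_affineSpan_eq_top,
    AffineSubspace.affineSpan_eq_top_iff_vectorSpan_eq_top_of_nonempty ℝ _ _ D.nonempty,
    ← Submodule.orthogonal_eq_bot_iff, Submodule.eq_bot_iff]
  intro x hx
  have hperp : ∀ f ∈ D, ⟪f, x⟫ = 0 := fun f hf =>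
    (Submodule.mem_orthogonal _ x).1 hx f
      (by simpa using vsub_mem_vectorSpan ℝ hf (zero_mem D))
  have hxC : x ∈ C := by
    rw [← innerDual_innerDual C]
    exact fun f hf => (hperp f hf).ge
  have hxC' : -x ∈ C := by
    rw [← innerDual_innerDual C]
    exact fun f hf => by simpa using (hperp f hf).le
  by_contra hx0
  exact hC x hxC hx0 hxC'

end InnerDual

section NeumannSeries

variable {E : Type*} [NormedAddCommGroup E] [NormedSpace ℝ E] {C : ProperCone ℝ E}
  {S : E →L[ℝ] E}

theorem tsum_pow_apply_mem (hS : ∀ x ∈ C, S x ∈ C) (hsum : Summable fun k : ℕ => S ^ k) {x : E}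
    (hx : x ∈ C) : (∑' k : ℕ, S ^ k) x ∈ C := by
  have hpow : ∀ k : ℕ, (S ^ k) x ∈ C := fun k => by
    rw [FunLike.coe_pow_eq_iterate]
    exact Set.MapsTo.iterate hS k hx
  have htend : Tendsto (fun N => ∑ k ∈ Finset.range N, (S ^ k) x) atTop
      (𝓝 ((∑' k : ℕ, S ^ k) x)) :=
    (hsum.hasSum.mapL (ContinuousLinearMap.apply ℝ E x)).tendsto_sum_nat
  exact C.isClosed.mem_of_tendsto htend (.of_forall fun N => sum_mem fun k _ => hpow k)

theorem exists_le_and_comp_le_of_summable_pow (hS : ∀ x ∈ C, S x ∈ C)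
    (hsum : Summable fun k : ℕ => S ^ k) {g : StrongDual ℝ E} (hg : ∀ x ∈ C, 0 ≤ g x) :
    ∃ f : StrongDual ℝ E, ∀ x ∈ C, g x ≤ f x ∧ f (S x) ≤ f x := by
  set R : E →L[ℝ] E := ∑' k : ℕ, S ^ k with hR
  have hRS : ∀ x, R x = x + R (S x) := fun x => by
    have := DFunLike.congr_fun hsum.tsum_pow_mul_one_sub x
    simpa [← hR, sub_eq_iff_eq_add] using this
  have hRC : ∀ x ∈ C, R x ∈ C := fun x hx => tsum_pow_apply_mem hS hsum hx
  refine ⟨g.comp R, fun x hx => ?_⟩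
  have hgR : g (R x) = g x + g (R (S x)) := by rw [← map_add, ← hRS]
  have hgx : 0 ≤ g x := hg x hx
  have hgRS : 0 ≤ g (R (S x)) := hg _ (hRC _ (hS x hx))
  exact ⟨by simpa only [ContinuousLinearMap.comp_apply, hgR, le_add_iff_nonneg_right] using hgRS,
    by simpa only [ContinuousLinearMap.comp_apply, hgR, le_add_iff_nonneg_left] using hgx⟩

end NeumannSeries

section SpectralRadius

theorem summable_smul_pow_of_enorm_lt_inv_spectralRadius {A : Type*} [NormedRing A]
    [NormedAlgebra ℂ A] [CompleteSpace A] {a : A} {z : ℂ}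
    (hz : ‖z‖ₑ < (spectralRadius ℂ a)⁻¹) : Summable fun k : ℕ => (z • a) ^ k := by
  obtain ⟨r, hzr, hr⟩ := ENNReal.lt_iff_exists_nnreal_btwn.1 hz
  have hr0 : 0 < r := by exact_mod_cast (zero_le (a := ‖z‖ₑ)).trans_lt hzr
  have hseries := (spectrum.hasFPowerSeriesOnBall_inverse_one_sub_smul ℂ a).exchange_radius
    ((spectrum.differentiableOn_inverse_one_sub_smul hr).hasFPowerSeriesOnBall hr0)
  have hz_mem : z ∈ Metric.eball (0 : ℂ) r := by
    rwa [Metric.mem_eball, edist_zero_right]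
  refine (hseries.hasSum hz_mem).summable.congr fun k => ?_
  simp [smul_pow]

attribute [local instance] Matrix.linftyOpNormedRing Matrix.linftyOpNormedAlgebra

theorem spectralRadius_map_ofReal_le {m : ℕ} (A : Mat m) :
    spectralRadius ℂ (A.map Complex.ofReal) ≤ ENNReal.ofReal (specRad A) := by
  have hbdd : BddAbove ((norm : ℂ → ℝ) '' spectrum ℂ (A.map Complex.ofReal)) :=
    ((spectrum.isCompact (𝕜 := ℂ) (A.map Complex.ofReal)).image continuous_norm).bddAbove
  refine iSup₂_le fun z hz => ?_
  rw [← enorm_eq_nnnorm, ← ofReal_norm]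
  exact ENNReal.ofReal_le_ofReal (le_csSup hbdd ⟨z, hz, rfl⟩)

theorem specRad_nonneg {m : ℕ} (A : Mat m) : 0 ≤ specRad A :=
  Real.sSup_nonneg (by rintro _ ⟨z, -, rfl⟩; exact norm_nonneg z)

theorem summable_inv_smul_pow_of_specRad_lt {m : ℕ} {A : Mat m} {r : ℝ} (hr : specRad A < r) :
    Summable fun k : ℕ => (r⁻¹ • A) ^ k := by
  have hr0 : 0 < r := (specRad_nonneg A).trans_lt hr
  have hlt : ‖((r⁻¹ : ℝ) : ℂ)‖ₑ < (spectralRadius ℂ (A.map Complex.ofReal))⁻¹ := by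
    rw [← ofReal_norm, Complex.norm_real, Real.norm_of_nonneg (inv_nonneg.2 hr0.le),
      ENNReal.ofReal_inv_of_pos hr0, ENNReal.inv_lt_inv]
    exact (spectralRadius_map_ofReal_le A).trans_lt ((ENNReal.ofReal_lt_ofReal_iff hr0).2 hr)
  have hre : Continuous (Complex.reAddGroupHom.mapMatrix (m := Fin m) (n := Fin m)) :=
    continuous_id.matrix_map Complex.continuous_re
  have hpow : ∀ k : ℕ, (((r⁻¹ : ℝ) : ℂ) • A.map Complex.ofReal) ^ k =
      Complex.ofRealHom.mapMatrix ((r⁻¹ • A) ^ k) := fun k => by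
    rw [map_pow]
    congr 1
    ext
    simp
  refine ((summable_smul_pow_of_enorm_lt_inv_spectralRadius hlt).map _ hre).congr fun k => ?_
  rw [Function.comp_apply, hpow]
  ext
  simp

theorem summable_toEuclideanCLM_pow_of_specRad_lt {m : ℕ} {A : Mat m} {r : ℝ}
    (hr : specRad A < r) :
    Summable fun k : ℕ => (r⁻¹ • Matrix.toEuclideanCLM (n := Fin m) (𝕜 := ℝ) A) ^ k := by
  let Φ := (Matrix.toEuclideanCLM (n := Fin m) (𝕜 := ℝ)).toAlgEquiv
  have hΦ : Continuous Φ := Φ.toLinearMap.continuous_of_finiteDimensional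
  refine ((summable_inv_smul_pow_of_specRad_lt hr).map Φ hΦ).congr fun k => ?_
  simp [Φ]

end SpectralRadius

section InvariantCone

variable {E : Type*} [NormedAddCommGroup E] [InnerProductSpace ℝ E] [CompleteSpace E]
  [FiniteDimensional ℝ E]

open ProperCone

theorem exists_mem_interior_innerDual_inner_map_le {C : ProperCone ℝ E}
    (hC : C.toPointedCone.toConvexCone.Salient) {T : E →L[ℝ] E} (hT : ∀ x ∈ C, T x ∈ C) {r : ℝ}
    (hr : 0 < r) (hsum : Summable fun k : ℕ => (r⁻¹ • T) ^ k) :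
    ∃ f ∈ interior (innerDual (C : Set E) : Set E), ∀ x ∈ C, ⟪f, T x⟫ ≤ r * ⟪f, x⟫ := by
  obtain ⟨g, hg⟩ := interior_innerDual_nonempty hC
  obtain ⟨δ, hδ, hgδ⟩ := mem_interior_innerDual_iff.1 hg
  have hS : ∀ x ∈ C, (r⁻¹ • T) x ∈ C := fun x hx => C.smul_mem (hT x hx) (inv_nonneg.2 hr.le)
  obtain ⟨φ, hφ⟩ := exists_le_and_comp_le_of_summable_pow hS hsum (g := innerSL ℝ g)
    fun x hx => (by positivity : 0 ≤ δ * ‖x‖).trans (hgδ x hx)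
  refine ⟨(InnerProductSpace.toDual ℝ E).symm φ,
    mem_interior_innerDual_iff.2 ⟨δ, hδ, fun x hx => ?_⟩, fun x hx => ?_⟩
  · rw [InnerProductSpace.toDual_symm_apply]
    exact (hgδ x hx).trans (hφ x hx).1
  · rw [InnerProductSpace.toDual_symm_apply, InnerProductSpace.toDual_symm_apply,
      ← inv_mul_le_iff₀ hr]
    simpa using (hφ x hx).2

end InvariantCone

section EuclideanSpace

variable {m : ℕ} {K : Set (EucSp m)}

/-- A proper cone in the sense of `IsProperCone` as a bundled `ProperCone`, which retains only
closedness and the cone axioms, not `pointed` and `solid`. -/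
def IsProperCone.toProperCone (hK : IsProperCone K) : ProperCone ℝ (EucSp m) where
  carrier := K
  add_mem' {x y} hx hy := by
    have hmid := hK.convex hx hy (a := 1 / 2) (b := 1 / 2) (by norm_num) (by norm_num)
      (by norm_num)
    simpa [smul_add, smul_smul] using hK.smul_mem 2 zero_le_two _ hmid
  zero_mem' := by
    obtain ⟨e, he⟩ := hK.solid
    simpa using hK.smul_mem 0 le_rfl e (interior_subset he)
  smul_mem' c x hx := hK.smul_mem c c.2 x hx
  isClosed' := hK.isClosed

theorem IsProperCone.isReproducing (hK : IsProperCone K) :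
    hK.toProperCone.toPointedCone.toConvexCone.IsReproducing :=
  isReproducing_of_nonempty_interior hK.solid

theorem IsProperCone.salient (hK : IsProperCone K) :
    hK.toProperCone.toPointedCone.toConvexCone.Salient :=
  fun x hx hx0 hnx => hx0 (hK.pointed x hx hnx)

theorem dualConeSet_eq_innerDual (K : Set (EucSp m)) :
    dualConeSet K = ProperCone.innerDual K := by
  ext f
  exact forall₂_congr fun x _ => by rw [real_inner_comm]; rfl

theorem isNormFn_of_seminorm (p : Seminorm ℝ (EucSp m)) (hp : ∀ x, p x = 0 ↔ x = 0) :
    IsNormFn p :=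
  ⟨apply_nonneg p, hp, map_smul_eq_mul p, map_add_le_add p⟩

theorem inducedNormFn_le {ν : EucSp m → ℝ} (hν : ∀ x, 0 ≤ ν x) {A : Mat m} {r : ℝ} (hr : 0 ≤ r)
    (h : ∀ x, ν (Matrix.toEuclideanLin A x) ≤ r * ν x) : inducedNormFn ν A ≤ r := by
  refine Real.sSup_le ?_ hr
  rintro _ ⟨x, -, rfl⟩
  exact div_le_of_le_mul₀ (hν x) hr (h x)

theorem exists_mem_interior_dualConeSet_inner_le (hK : IsProperCone K) {A : Mat m}
    (hA : LeavesInv A K) {r : ℝ} (hr : specRad A < r) :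
    ∃ f ∈ interior (dualConeSet K), ∀ x ∈ K, ⟪f, Matrix.toEuclideanLin A x⟫ ≤ r * ⟪f, x⟫ := by
  rw [dualConeSet_eq_innerDual]
  exact exists_mem_interior_innerDual_inner_map_le hK.salient
    (T := Matrix.toEuclideanCLM (n := Fin m) (𝕜 := ℝ) A) hA ((specRad_nonneg A).trans_lt hr)
    (summable_toEuclideanCLM_pow_of_specRad_lt hr)

end EuclideanSpace

/-- If `M` leaves the proper cone `K` invariant and `ε > 0`, then there exists
`f` in the interior of the dual cone `K*` whose cone linear absolute norm `‖·‖_f` satisfies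
`‖M‖_f < ρ(M) + ε` in the induced matrix norm. -/
theorem stmt18 (n : ℕ) (hn : 1 ≤ n) (K : Set (EucSp n)) (hK : IsProperCone K)
    (M : Mat n) (hM : LeavesInv M K) (ε : ℝ) (hε : 0 < ε) :
    ∃ f ∈ interior (dualConeSet K), ∃ ν : EucSp n → ℝ,
      IsNormFn ν ∧ (∀ x ∈ K, ν x = ⟪f, x⟫) ∧ IsConeAbsolute K ν ∧
      inducedNormFn ν M < specRad M + ε := by
  obtain ⟨r, hMr, hrε⟩ := exists_between (lt_add_of_pos_right (specRad M) hε)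
  have hr : 0 ≤ r := (specRad_nonneg M).trans hMr.le
  obtain ⟨f, hf, hfM⟩ := exists_mem_interior_dualConeSet_inner_le hK hM hMr
  have hf_nonneg : ∀ x ∈ hK.toProperCone.toPointedCone, 0 ≤ innerₗ (EucSp n) f x :=
    interior_subset hf
  obtain ⟨δ, hδ, hfδ⟩ := mem_interior_innerDual_iff.1 (dualConeSet_eq_innerDual K ▸ hf)
  set ν := coneSeminorm hK.toProperCone hK.isReproducing (innerₗ (EucSp n) f) hf_nonneg
  refine ⟨f, hf, ν, isNormFn_of_seminorm ν fun x =>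
    coneSeminorm_eq_zero_iff hK.isReproducing hf_nonneg hδ hfδ,
    fun x => coneNorm_of_mem hK.isReproducing hf_nonneg,
    coneNorm_eq_sInf_coneNorm hK.isReproducing hf_nonneg, ?_⟩
  have hνM : ∀ x, ν (Matrix.toEuclideanLin M x) ≤ r * ν x :=
    coneSeminorm_map_le_mul hK.isReproducing hf_nonneg hr hM hfM
  exact (inducedNormFn_le (apply_nonneg ν) hr hνM).trans_lt hrε

end
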